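/- Let G be a finite group. Every maximal subgroup of G is k-submodular in G if and only if G is supersoluble and for every complemented chief factor H/K of G, the group G/C_G(H/K) is either trivial or cyclic of order q^n for some prime q and some natural number n ≤ k. -/

import Mathlib

open Pointwise

/-- A subgroup `H` of `K` is `n`-modularly embedded in `K` if either `H ◁ K`, or
`K/Core_K(H)` is a non-nilpotent group of order `p * q ^ n` with `|K : H| = p`
for some primes `p`, `q`. -/
def ModularlyEmbedded {G : Type*} [Group G] (n : ℕ) (H K : Subgroup G) : Prop :=
  H ≤ K ∧ ((H.subgroupOf K).Normal ∨
    ∃ p q : ℕ, p.Prime ∧ q.Prime ∧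
      ¬ Group.IsNilpotent (↥K ⧸ (H.subgroupOf K).normalCore) ∧
      Nat.card (↥K ⧸ (H.subgroupOf K).normalCore) = p * q ^ n ∧
      (H.subgroupOf K).index = p)

/-- `H` is `k`-submodular in `K` if there is a chain `H = H_0 ≤ H_1 ≤ ⋯ ≤ H_m = K`
such that `H_{i-1}` is `n_i`-modularly embedded in `H_i` for some natural number
`n_i ≤ k`, for every `i`. -/
def KSubmodularIn {G : Type*} [Group G] (k : ℕ) (H K : Subgroup G) : Prop :=
  ∃ (m : ℕ) (c : ℕ → Subgroup G), c 0 = H ∧ c m = K ∧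
    ∀ i < m, ∃ n : ℕ, 0 < n ∧ n ≤ k ∧ ModularlyEmbedded n (c i) (c (i + 1))

/-- A group is supersolvable if it has a normal series with cyclic factors
(for finite groups this is equivalent to having a chief series all of whose
factors are cyclic of prime order). -/
def IsSupersolvable (G : Type*) [Group G] : Prop :=
  ∃ (m : ℕ) (c : ℕ → Subgroup G), c 0 = ⊥ ∧ c m = ⊤ ∧
    (∀ i, (c i).Normal) ∧ (∀ i, i < m → c i ≤ c (i + 1)) ∧
    ∀ i, i < m → ∀ [_h : ((c i).subgroupOf (c (i + 1))).Normal],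
      IsCyclic (↥(c (i + 1)) ⧸ (c i).subgroupOf (c (i + 1)))

/-- The centralizer C_G(H/K) of a factor `H/K`, where `H` and `K` are normal
subgroups of `G`: all `g` acting trivially on `H/K` by conjugation. -/
def chiefCentralizer {G : Type*} [Group G] (H K : Subgroup G)
    (hH : H.Normal) (hK : K.Normal) : Subgroup G where
  carrier := {g | ∀ h ∈ H, g * h * g⁻¹ * h⁻¹ ∈ K}
  one_mem' := by intro h _; simpa using K.one_mem
  mul_mem' := by
    intro a b ha hb h hh
    have h2 : b * h * b⁻¹ ∈ H := hH.conj_mem h hh b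
    have hmem := K.mul_mem (ha _ h2) (hb h hh)
    convert hmem using 1
    group
  inv_mem' := by
    intro a ha h hh
    have h2 : a⁻¹ * h * a ∈ H := by simpa using hH.conj_mem h hh a⁻¹
    have k1 := K.inv_mem (ha _ h2)
    convert k1 using 1
    group

/-- `H/K` is a chief factor of `G`: both are normal in `G`, `K < H`, and there
is no normal subgroup of `G` strictly between `K` and `H`. -/
def IsChiefFactor {G : Type*} [Group G] (H K : Subgroup G) : Prop :=
  H.Normal ∧ K.Normal ∧ K < H ∧
    ∀ L : Subgroup G, L.Normal → K ≤ L → L ≤ H → L = K ∨ L = H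

/-!
If a maximal subgroup `M` has a supplement `H` with `H/K` a chief factor of prime order and
`H ⊓ M = K`, then `C_G(H/K) ⊓ M` is the core of `M`, so that
`|G : Core M| = |G : C_G(H/K)| * |G : M|`. Hence `M` is `k`-submodular exactly when `C_G(H/K)` is
the whole group or has prime power index `q ^ n` with `0 < n ≤ k`; and `G/C_G(H/K)` embeds in the
cyclic group `(ZMod |H/K|)ˣ`.

It remains to see that chief factors have prime order once all maximal subgroups have prime index,
which is Huppert's theorem. Sylow's theorem makes the Sylow subgroup for the largest prime normal,
so `G` is solvable. By induction all chief factors of `G/N` have prime order, where `N` is a minimal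
normal subgroup. If some maximal subgroup does not contain `N`, it complements `N`. Otherwise
`N ≤ Φ(G)` is a `p`-group, and one may assume that `N` is the unique minimal normal subgroup. Let
`P` be a maximal normal `p`-subgroup. By a Frattini argument `P` is the stabilizer of a chief series
of `G` between `N` and `P`. Since `P` centralizes `N`, the group `G` acts on `N` through an abelian
group of exponent dividing `p - 1`, so by Schur's lemma each element acts as a power map, and
irreducibility forces `|N| = p`.
-/

/-! ### Chief factors -/

section ChiefFactors

variable {G : Type*} [Group G] {H K L N : Subgroup G}

namespace IsChiefFactor

theorem normal_left (h : IsChiefFactor H K) : H.Normal := h.1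

theorem normal_right (h : IsChiefFactor H K) : K.Normal := h.2.1

theorem lt (h : IsChiefFactor H K) : K < H := h.2.2.1

theorem eq_or_eq (h : IsChiefFactor H K) (hL : L.Normal) (hKL : K ≤ L) (hLH : L ≤ H) :
    L = K ∨ L = H :=
  h.2.2.2 L hL hKL hLH

theorem eq_of_not_le (h : IsChiefFactor H K) (hL : L.Normal) (hKL : K ≤ L) (hLH : L ≤ H)
    (hne : ¬ L ≤ K) : L = H :=
  (h.eq_or_eq hL hKL hLH).resolve_left fun hLK => hne hLK.le

theorem le_of_inf_ne_bot (h : IsChiefFactor N ⊥) (hL : L.Normal) (hne : N ⊓ L ≠ ⊥) : N ≤ L := by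
  have := h.normal_left
  rw [← inf_eq_left]
  exact (h.eq_or_eq (Subgroup.normal_inf_normal N L) bot_le inf_le_left).resolve_left hne

theorem map_mk' [K.Normal] (h : IsChiefFactor H K) :
    IsChiefFactor (H.map (QuotientGroup.mk' K)) ⊥ := by
  have hsurj := QuotientGroup.mk'_surjective K
  refine ⟨h.normal_left.map _ hsurj, inferInstance, bot_lt_iff_ne_bot.2 ?_, fun L hL _ hLH => ?_⟩
  · rw [Ne, Subgroup.map_eq_bot_iff, QuotientGroup.ker_mk']
    exact h.lt.not_ge
  · rw [← Subgroup.comap_le_comap_of_surjective hsurj, QuotientGroup.comap_map_mk',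
      sup_eq_right.2 h.lt.le] at hLH
    rw [← Subgroup.map_comap_eq_self_of_surjective hsurj L]
    rcases h.eq_or_eq (hL.comap _) (QuotientGroup.le_comap_mk' K L) hLH with hL' | hL' <;> rw [hL']
    · exact Or.inl (QuotientGroup.map_mk'_self K)
    · exact Or.inr rfl

theorem sup_of_inf_eq_bot (h : IsChiefFactor N ⊥) (hL : L.Normal) (hNL : N ⊓ L = ⊥) :
    IsChiefFactor (N ⊔ L) L := by
  have hN := h.normal_left
  refine ⟨Subgroup.sup_normal N L, hL, right_lt_sup.2 fun hle => ?_, fun T hT hLT hTN => ?_⟩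
  · exact h.lt.ne' (by rwa [inf_eq_left.2 hle] at hNL)
  · rcases h.eq_or_eq (Subgroup.normal_inf_normal N T) bot_le inf_le_left with hNT | hNT
    · left
      refine le_antisymm (fun t ht => ?_) hLT
      obtain ⟨n, hn, l, hl, rfl⟩ := Subgroup.mem_sup_of_normal_left.1 (hTN ht)
      have hnT : n ∈ N ⊓ T := ⟨hn, (T.mul_mem_cancel_right (hLT hl)).1 ht⟩
      rw [hNT, Subgroup.mem_bot] at hnT
      rwa [hnT, one_mul]
    · exact Or.inr (hTN.antisymm (sup_le (inf_eq_left.1 hNT) hLT))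

end IsChiefFactor

theorem card_map_mk'_eq_relIndex [K.Normal] :
    Nat.card (H.map (QuotientGroup.mk' K)) = K.relIndex H := by
  rw [← Subgroup.relIndex_ker, QuotientGroup.ker_mk']

theorem exists_isChiefFactor_above [Finite G] (hK : K.Normal) (hH : H.Normal) (h : K < H) :
    ∃ E, IsChiefFactor E K ∧ E ≤ H := by
  obtain ⟨E, ⟨hE, hKE, hEH⟩, hmin⟩ :=
    (Set.toFinite {E : Subgroup G | E.Normal ∧ K < E ∧ E ≤ H}).exists_minimal ⟨H, hH, h, le_rfl⟩
  refine ⟨E, ⟨hE, hK, hKE, fun L hL hKL hLE => ?_⟩, hEH⟩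
  rcases hKL.eq_or_lt with hKL | hKL
  · exact Or.inl hKL.symm
  · exact Or.inr (hLE.antisymm (hmin ⟨hL, hKL, hLE.trans hEH⟩ hLE))

theorem exists_isChiefFactor_below [Finite G] (hK : K.Normal) (hH : H.Normal) (h : K < H) :
    ∃ E, IsChiefFactor H E ∧ K ≤ E := by
  obtain ⟨E, ⟨hE, hEH, hKE⟩, hmax⟩ :=
    (Set.toFinite {E : Subgroup G | E.Normal ∧ E < H ∧ K ≤ E}).exists_maximal ⟨K, hK, h, le_rfl⟩
  refine ⟨E, ⟨hH, hE, hEH, fun L hL hEL hLH => ?_⟩, hKE⟩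
  rcases hLH.eq_or_lt with hLH | hLH
  · exact Or.inr hLH
  · exact Or.inl ((hmax ⟨hL, hLH, hKE.trans hEL⟩ hEL).antisymm hEL)

end ChiefFactors

/-! ### Chief factors and maximal subgroups of prime order or index -/

section PrimeOrder

variable {G : Type*} [Group G] {H K M N : Subgroup G}

theorem normal_of_le_of_isCyclic [hN : N.Normal] [IsCyclic N] (h : K ≤ N) : K.Normal where
  conj_mem x hx g := by
    obtain ⟨m, hm⟩ := MonoidHom.map_cyclic (MulAut.conjNormal g : MulAut N).toMonoidHom
    have hpow := congrArg Subtype.val (hm ⟨x, h hx⟩)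
    rw [MulEquiv.coe_toMonoidHom, MulAut.conjNormal_apply] at hpow
    rw [hpow]
    exact K.zpow_mem hx m

theorem IsChiefFactor.card_prime_of_isCyclic (h : IsChiefFactor N ⊥) [IsCyclic N] :
    (Nat.card N).Prime := by
  have hN := h.normal_left
  have : IsSimpleGroup N :=
    { exists_pair_ne := (N.nontrivial_iff_ne_bot.2 h.lt.ne').exists_pair_ne
      eq_bot_or_eq_top_of_normal := fun T _ => by
        have hTN : T.map N.subtype ≤ N := Subgroup.map_subtype_le T
        rcases h.eq_or_eq (normal_of_le_of_isCyclic hTN) bot_le hTN with hT | hT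
        · exact Or.inl ((T.map_eq_bot_iff_of_injective N.subtype_injective).1 hT)
        · refine Or.inr (Subgroup.map_injective N.subtype_injective ?_)
          rw [hT, ← MonoidHom.range_eq_map, N.range_subtype] }
  exact Group.is_simple_iff_prime_card.1 this

theorem IsChiefFactor.relIndex_prime_of_isCyclic (h : IsChiefFactor H K) [K.Normal]
    [IsCyclic (H.map (QuotientGroup.mk' K))] : (K.relIndex H).Prime := by
  rw [← card_map_mk'_eq_relIndex]
  exact h.map_mk'.card_prime_of_isCyclic

theorem isCoatom_of_index_prime (hM : M.index.Prime) : IsCoatom M := by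
  refine ⟨fun h => hM.ne_one (Subgroup.index_eq_one.2 h), fun T hT => ?_⟩
  have hmul := Subgroup.relIndex_mul_index hT.le
  rcases (Nat.prime_mul_iff.1 (hmul ▸ hM)) with ⟨-, hT1⟩ | ⟨-, hT1⟩
  · exact Subgroup.index_eq_one.1 hT1
  · exact absurd (Subgroup.relIndex_eq_one.1 hT1) hT.not_ge

theorem index_prime_of_isCoatom_of_normal (hM : IsCoatom M) [hMn : M.Normal] :
    M.index.Prime := by
  have hchief : IsChiefFactor ⊤ M :=
    ⟨inferInstance, hMn, hM.lt_top, fun L _ hML _ => (hM.le_iff.1 hML).symm⟩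
  obtain ⟨g, -, hg⟩ := SetLike.exists_of_lt hM.lt_top
  have hsup : M ⊔ Subgroup.zpowers g = ⊤ :=
    hM.2 _ (left_lt_sup.2 fun h => hg (h (Subgroup.mem_zpowers g)))
  have hcyc : IsCyclic ((⊤ : Subgroup G).map (QuotientGroup.mk' M)) := by
    rw [← hsup, Subgroup.map_sup, QuotientGroup.map_mk'_self, bot_sup_eq, MonoidHom.map_zpowers]
    infer_instance
  rw [← M.relIndex_top_right]
  exact hchief.relIndex_prime_of_isCyclic

end PrimeOrder

/-! ### The action on a factor of prime order -/

section FactorAction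

variable {G : Type*} [Group G] {H K P : Subgroup G}

/-- The conjugation action of `G` on the factor `H/K`, encoded as the image of `H` in `G ⧸ K`. -/
def conjFactor (H K : Subgroup G) (hH : H.Normal) [K.Normal] :
    G →* MulAut (H.map (QuotientGroup.mk' K)) :=
  have := hH.map _ (QuotientGroup.mk'_surjective K)
  MulAut.conjNormal.comp (QuotientGroup.mk' K)

theorem ker_conjFactor (hH : H.Normal) [hK : K.Normal] :
    (conjFactor H K hH).ker = chiefCentralizer H K hH hK := by
  ext g
  change conjFactor H K hH g = 1 ↔ ∀ h ∈ H, g * h * g⁻¹ * h⁻¹ ∈ K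
  rw [MulEquiv.ext_iff, Subtype.forall]
  simp only [← QuotientGroup.eq_one_iff (N := K)]
  simp [conjFactor, Subtype.ext_iff, mul_inv_eq_one]

theorem chiefCentralizer_normal (hH : H.Normal) (hK : K.Normal) :
    (chiefCentralizer H K hH hK).Normal := by
  rw [← ker_conjFactor]
  infer_instance

theorem le_chiefCentralizer_of_inf_le [P.Normal] (hH : H.Normal) (hK : K.Normal)
    (h : P ⊓ H ≤ K) : P ≤ chiefCentralizer H K hH hK := fun _ hx _ hy =>
  h (Subgroup.commutator_le_inf P H (Subgroup.commutator_mem_commutator hx hy))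

/-- A factor of prime order `p` has automorphism group `(ZMod p)ˣ`. -/
theorem exists_monoidHom_ker_eq_chiefCentralizer (hp : (K.relIndex H).Prime) (hH : H.Normal)
    (hK : K.Normal) :
    ∃ φ : G →* (ZMod (K.relIndex H))ˣ, φ.ker = chiefCentralizer H K hH hK := by
  have hcard : Nat.card (H.map (QuotientGroup.mk' K)) = K.relIndex H := card_map_mk'_eq_relIndex
  have : Fact (K.relIndex H).Prime := ⟨hp⟩
  have : IsCyclic (H.map (QuotientGroup.mk' K)) := isCyclic_of_prime_card hcard
  rw [← hcard]
  refine ⟨(IsCyclic.mulAutMulEquiv _).toMonoidHom.comp (conjFactor H K hH), ?_⟩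
  rw [← ker_conjFactor]
  exact MonoidHom.ker_mulEquiv_comp (conjFactor H K hH) (IsCyclic.mulAutMulEquiv _)

theorem commutator_le_chiefCentralizer (hp : (K.relIndex H).Prime) (hH : H.Normal)
    (hK : K.Normal) : commutator G ≤ chiefCentralizer H K hH hK := by
  obtain ⟨φ, hφ⟩ := exists_monoidHom_ker_eq_chiefCentralizer hp hH hK
  rw [← hφ]
  exact Abelianization.commutator_subset_ker φ

theorem pow_mem_chiefCentralizer (hp : (K.relIndex H).Prime) (hH : H.Normal) (hK : K.Normal)
    (g : G) : g ^ (K.relIndex H - 1) ∈ chiefCentralizer H K hH hK := by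
  have : Fact (K.relIndex H).Prime := ⟨hp⟩
  obtain ⟨φ, hφ⟩ := exists_monoidHom_ker_eq_chiefCentralizer hp hH hK
  rw [← hφ, MonoidHom.mem_ker, map_pow]
  exact ZMod.units_pow_card_sub_one_eq_one _ _

theorem exists_chiefCentralizer_sup_zpowers_eq_top (hp : (K.relIndex H).Prime) (hH : H.Normal)
    (hK : K.Normal) : ∃ g : G, chiefCentralizer H K hH hK ⊔ Subgroup.zpowers g = ⊤ := by
  have : Fact (K.relIndex H).Prime := ⟨hp⟩
  obtain ⟨φ, hφ⟩ := exists_monoidHom_ker_eq_chiefCentralizer hp hH hK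
  obtain ⟨u, hu⟩ := (Subgroup.isCyclic_iff_exists_zpowers_eq_top φ.range).1 inferInstance
  obtain ⟨g, rfl⟩ : u ∈ φ.range := hu ▸ Subgroup.mem_zpowers u
  refine ⟨g, ?_⟩
  rw [← hφ, sup_comm, ← Subgroup.comap_map_eq, MonoidHom.map_zpowers, hu, φ.range_eq_map,
    Subgroup.comap_map_eq, top_sup_eq]

theorem le_chiefCentralizer_of_isPGroup (hp : (K.relIndex H).Prime) (hH : H.Normal)
    (hK : K.Normal) (hP : IsPGroup (K.relIndex H) P) : P ≤ chiefCentralizer H K hH hK := by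
  have : Fact (K.relIndex H).Prime := ⟨hp⟩
  obtain ⟨φ, hφ⟩ := exists_monoidHom_ker_eq_chiefCentralizer hp hH hK
  intro x hx
  obtain ⟨m, hm⟩ := hP ⟨x, hx⟩
  have hpow : φ x ^ K.relIndex H ^ m = 1 := by
    rw [← map_pow, show x ^ K.relIndex H ^ m = 1 from congrArg Subtype.val hm, map_one]
  have hcop : Nat.Coprime (K.relIndex H ^ m) (K.relIndex H - 1) :=
    ((Nat.coprime_self_sub_right hp.one_le).2 (Nat.coprime_one_right _)).pow_left m
  rw [← hφ, MonoidHom.mem_ker, ← pow_one (φ x), ← hcop]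
  exact pow_gcd_eq_one.2 ⟨hpow, ZMod.units_pow_card_sub_one_eq_one _ _⟩

theorem le_chiefCentralizer_self (hp : (K.relIndex H).Prime) (hH : H.Normal) (hK : K.Normal) :
    H ≤ chiefCentralizer H K hH hK := by
  have : Fact (K.relIndex H).Prime := ⟨hp⟩
  have hcyc : IsCyclic (H.map (QuotientGroup.mk' K)) :=
    isCyclic_of_prime_card card_map_mk'_eq_relIndex
  intro x hx y hy
  have hcomm := congrArg Subtype.val (hcyc.isMulCommutative.is_comm.comm
    ⟨QuotientGroup.mk' K x, Subgroup.mem_map_of_mem _ hx⟩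
    ⟨QuotientGroup.mk' K y, Subgroup.mem_map_of_mem _ hy⟩)
  rw [← QuotientGroup.eq_one_iff]
  simpa [mul_inv_eq_one, mul_inv_eq_iff_eq_mul] using hcomm

end FactorAction

/-! ### Complements of chief factors -/

section Complements

variable {G : Type*} [Group G] {H K L M : Subgroup G}

theorem inf_normal_of_le_chiefCentralizer (hH : H.Normal) (hK : K.Normal) (hL : L.Normal)
    (hLC : L ≤ chiefCentralizer H K hH hK) (hKM : K ≤ M) (hHM : H ⊔ M = ⊤) : (L ⊓ M).Normal where
  conj_mem x hx g := by
    obtain ⟨h, hh, m, hm, rfl⟩ := Subgroup.mem_sup_of_normal_left.1 (hHM ▸ Subgroup.mem_top g)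
    let y := m * x * m⁻¹
    have hyL : y ∈ L := hL.conj_mem x hx.1 m
    have hyM : y ∈ M := M.mul_mem (M.mul_mem hm hx.2) (M.inv_mem hm)
    have hK' : y⁻¹ * h * y * h⁻¹ ∈ K := by simpa using hLC (L.inv_mem hyL) h hh
    refine ⟨hL.conj_mem x hx.1 (h * m), ?_⟩
    have hconj : h * m * x * (h * m)⁻¹ = y * (y⁻¹ * h * y * h⁻¹) := by simp only [y]; group
    rw [hconj]
    exact M.mul_mem hyM (hKM hK')

theorem inf_eq_of_sup_eq_top (hHK : IsChiefFactor H K)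
    (hHC : H ≤ chiefCentralizer H K hHK.normal_left hHK.normal_right) (hKM : K ≤ M) (hM : M ≠ ⊤)
    (hHM : H ⊔ M = ⊤) : H ⊓ M = K := by
  have hnormal : (H ⊓ M).Normal :=
    inf_normal_of_le_chiefCentralizer hHK.normal_left hHK.normal_right hHK.normal_left
      hHC hKM hHM
  refine (hHK.eq_or_eq hnormal (le_inf hHK.lt.le hKM) inf_le_left).resolve_right fun h => hM ?_
  rwa [sup_eq_right.2 (inf_eq_left.1 h)] at hHM

theorem index_eq_relIndex_of_sup_eq_top [Finite G] (hH : H.Normal) (hHM : H ⊔ M = ⊤)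
    (hinf : H ⊓ M = K) : M.index = K.relIndex H := by
  have hindex : K.relIndex M = H.index := by
    rw [← hinf, Subgroup.inf_relIndex_right, ← Subgroup.relIndex_sup_right, sup_comm, hHM,
      Subgroup.relIndex_top_right]
  have hmul : H.index * M.index = H.index * K.relIndex H := by
    rw [← hindex, Subgroup.relIndex_mul_index (hinf ▸ inf_le_right), hindex, mul_comm,
      Subgroup.relIndex_mul_index (hinf ▸ inf_le_left)]
  exact Nat.eq_of_mul_eq_mul_left (Nat.pos_of_ne_zero Subgroup.index_ne_zero_of_finite) hmul

theorem chiefCentralizer_inf_eq_normalCore (hH : H.Normal) (hK : K.Normal) (hHM : H ⊔ M = ⊤)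
    (hinf : H ⊓ M = K) : chiefCentralizer H K hH hK ⊓ M = M.normalCore := by
  have := inf_normal_of_le_chiefCentralizer hH hK (chiefCentralizer_normal hH hK) le_rfl
    (hinf ▸ inf_le_right) hHM
  refine le_antisymm (Subgroup.normal_le_normalCore.2 inf_le_right)
    (le_inf (le_chiefCentralizer_of_inf_le hH hK ?_) M.normalCore_le)
  rw [← hinf, inf_comm]
  exact inf_le_inf_left H M.normalCore_le

theorem index_chiefCentralizer_mul_index [Finite G] (hH : H.Normal) (hK : K.Normal)
    (hHC : H ≤ chiefCentralizer H K hH hK) (hHM : H ⊔ M = ⊤) (hinf : H ⊓ M = K) :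
    (chiefCentralizer H K hH hK).index * M.index = M.normalCore.index := by
  have hCM : chiefCentralizer H K hH hK ⊔ M = ⊤ := top_unique (hHM ▸ sup_le_sup_right hHC M)
  rw [index_eq_relIndex_of_sup_eq_top (chiefCentralizer_normal hH hK) hCM
    (chiefCentralizer_inf_eq_normalCore hH hK hHM hinf), mul_comm]
  exact Subgroup.relIndex_mul_index
    (chiefCentralizer_inf_eq_normalCore hH hK hHM hinf ▸ inf_le_left)

end Complements

/-! ### Supersolvability in terms of chief factors -/

section Supersolvable

/-- Every chief factor of `G` has prime order; for finite `G` this is equivalent to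
supersolvability. -/
def HasPrimeChiefFactors (G : Type*) [Group G] : Prop :=
  ∀ ⦃H K : Subgroup G⦄, IsChiefFactor H K → (K.relIndex H).Prime

/-- There is a series of normal subgroups of `G` with cyclic factors that starts at `N` instead
of `⊥`, so that supersolvability can be proved by induction on `N`. -/
def HasCyclicNormalSeries {G : Type*} [Group G] (N : Subgroup G) : Prop :=
  ∃ (m : ℕ) (c : ℕ → Subgroup G), c 0 = N ∧ c m = ⊤ ∧
    (∀ i, (c i).Normal) ∧ (∀ i, i < m → c i ≤ c (i + 1)) ∧
    ∀ i, i < m → ∀ [_h : ((c i).subgroupOf (c (i + 1))).Normal],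
      IsCyclic (↥(c (i + 1)) ⧸ (c i).subgroupOf (c (i + 1)))

variable {G : Type*} [Group G] {B C H K N : Subgroup G}

theorem isSupersolvable_iff_hasCyclicNormalSeries_bot :
    IsSupersolvable G ↔ HasCyclicNormalSeries (⊥ : Subgroup G) :=
  Iff.rfl

theorem HasCyclicNormalSeries.of_le (hC : HasCyclicNormalSeries C) (hN : N.Normal) (hNC : N ≤ C)
    (hcyc : ∀ [(N.subgroupOf C).Normal], IsCyclic (C ⧸ N.subgroupOf C)) :
    HasCyclicNormalSeries N := by
  obtain ⟨m, c, rfl, htop, hnormal, hle, hcyclic⟩ := hC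
  refine ⟨m + 1, fun i => Nat.casesOn i N c, rfl, htop, ?_, ?_, ?_⟩
  · rintro (_ | i)
    exacts [hN, hnormal i]
  · rintro (_ | i) hi
    exacts [hNC, hle i (by omega)]
  · rintro (_ | i) hi
    exacts [hcyc, hcyclic i (by omega)]

theorem HasPrimeChiefFactors.hasCyclicNormalSeries [Finite G] (h : HasPrimeChiefFactors G)
    (hN : N.Normal) : HasCyclicNormalSeries N := by
  induction N using WellFoundedGT.induction with
  | ind N ih =>
    rcases eq_or_ne N ⊤ with rfl | hNtop
    · exact ⟨0, fun _ => ⊤, rfl, rfl, fun _ => hN, by simp, by simp⟩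
    · obtain ⟨E, hE, -⟩ := exists_isChiefFactor_above hN inferInstance (lt_top_iff_ne_top.2 hNtop)
      have : Fact (N.relIndex E).Prime := ⟨h hE⟩
      exact (ih E hE.lt hE.normal_left).of_le hN hE.lt.le
        (isCyclic_of_prime_card (p := N.relIndex E) rfl)

theorem HasPrimeChiefFactors.isSupersolvable [Finite G] (h : HasPrimeChiefFactors G) :
    IsSupersolvable G :=
  isSupersolvable_iff_hasCyclicNormalSeries_bot.2 (h.hasCyclicNormalSeries inferInstance)

theorem isCyclic_range_of_ker_le {A B C : Type*} [Group A] [Group B] [Group C] {f : A →* B}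
    {g : A →* C} (h : f.ker ≤ g.ker) [IsCyclic f.range] : IsCyclic g.range := by
  have : IsCyclic (A ⧸ f.ker) :=
    isCyclic_of_surjective (QuotientGroup.quotientKerEquivRange f).symm (MulEquiv.surjective _)
  exact isCyclic_of_surjective (QuotientGroup.lift f.ker g.rangeRestrict (by simpa using h))
    (QuotientGroup.lift_surjective_of_surjective _ _ g.rangeRestrict_surjective _)

theorem isCyclic_map_mk'_of_inf_le [(B.subgroupOf C).Normal] [IsCyclic (C ⧸ B.subgroupOf C)]
    [K.Normal] (h : B ⊓ H ≤ K) : IsCyclic ((C ⊓ H).map (QuotientGroup.mk' K)) := by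
  let f : ↥(C ⊓ H) →* C ⧸ B.subgroupOf C :=
    (QuotientGroup.mk' _).comp (Subgroup.inclusion inf_le_left)
  let g : ↥(C ⊓ H) →* G ⧸ K := (QuotientGroup.mk' K).comp (C ⊓ H).subtype
  have hker : f.ker ≤ g.ker := fun x hx => by
    have hxB : Subgroup.inclusion inf_le_left x ∈ B.subgroupOf C :=
      (QuotientGroup.eq_one_iff _).1 hx
    exact (QuotientGroup.eq_one_iff _).2 (h ⟨hxB, x.2.2⟩)
  have : IsCyclic g.range := isCyclic_range_of_ker_le hker
  rwa [MonoidHom.range_comp, Subgroup.range_subtype] at this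

theorem IsSupersolvable.hasPrimeChiefFactors (h : IsSupersolvable G) :
    HasPrimeChiefFactors G := by
  intro H K hHK
  obtain ⟨m, c, hbot, htop, hnormal, -, hcyclic⟩ := h
  obtain ⟨i, him, hi, hi'⟩ : ∃ i < m, c i ⊓ H ≤ K ∧ ¬ c (i + 1) ⊓ H ≤ K := by
    by_contra! hstep
    have hle : ∀ i ≤ m, c i ⊓ H ≤ K := fun i => by
      induction i with
      | zero => simp [hbot]
      | succ i ih => exact fun him => hstep i him (ih (by omega))
    exact hHK.lt.not_ge (by simpa [htop] using hle m le_rfl)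
  have := hHK.normal_left
  have := hHK.normal_right
  have := hnormal i
  have := hnormal (i + 1)
  have := hcyclic i him
  have hsup : (c (i + 1) ⊓ H) ⊔ K = H :=
    hHK.eq_of_not_le inferInstance le_sup_right (sup_le inf_le_right hHK.lt.le)
      fun hle => hi' (le_sup_left.trans hle)
  have hcyc : IsCyclic (H.map (QuotientGroup.mk' K)) := by
    rw [← hsup, Subgroup.map_sup, QuotientGroup.map_mk'_self, sup_bot_eq]
    exact isCyclic_map_mk'_of_inf_le hi
  exact hHK.relIndex_prime_of_isCyclic

end Supersolvable

/-! ### Minimal normal subgroups with a small action -/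

section Eigenvalue

variable {G : Type*} [Group G] {N : Subgroup G} {p : ℕ}

theorem exists_hasEigenvector_of_pow_eq_one [Fact p.Prime] {V : Type*} [AddCommGroup V]
    [Module (ZMod p) V] [Nontrivial V] [Module.Finite (ZMod p) V] {F : Module.End (ZMod p) V}
    (hF : F ^ (p - 1) = 1) : ∃ (a : ZMod p) (v : V), F.HasEigenvector a v := by
  have hp : p.Prime := Fact.out
  have hFp : F ^ p = F := by
    rw [← mul_pow_sub_one hp.ne_zero, hF, mul_one]
  have hdvd : minpoly (ZMod p) F ∣ Polynomial.X ^ p - Polynomial.X :=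
    minpoly.dvd _ _ (by simp [hFp])
  have hsplits : (minpoly (ZMod p) F).Splits :=
    (GaloisField.splits_zmod_X_pow_sub_X p).of_dvd
      (FiniteField.X_pow_card_sub_X_ne_zero (ZMod p) hp.one_lt) hdvd
  obtain ⟨a, ha⟩ := hsplits.exists_eval_eq_zero
    (minpoly.degree_pos (Algebra.IsIntegral.isIntegral F)).ne'
  exact ⟨a, (Module.End.hasEigenvalue_of_isRoot ha).exists_hasEigenvector⟩

theorem exists_ne_zero_map_eq_nsmul {V : Type*} [AddCommGroup V] [Finite V] [Nontrivial V]
    [Fact p.Prime] (hV : ∀ x : V, p • x = 0) {f : V →+ V} (hf : ∀ x, f^[p - 1] x = x) :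
    ∃ x ≠ 0, ∃ a : ℕ, f x = a • x := by
  have : Module (ZMod p) V := AddCommGroup.zmodModule hV
  let F : Module.End (ZMod p) V := f.toZModLinearMap p
  have hF : F ^ (p - 1) = 1 := by
    ext x
    rw [Module.End.pow_apply]
    exact hf x
  obtain ⟨a, v, hv⟩ := exists_hasEigenvector_of_pow_eq_one hF
  refine ⟨v, hv.2, a.val, ?_⟩
  rw [← Nat.cast_smul_eq_nsmul (ZMod p), ZMod.natCast_zmod_val]
  exact hv.apply_eq_smul

theorem exists_ne_one_map_eq_pow {A : Type*} [CommGroup A] [Finite A] [Nontrivial A]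
    [Fact p.Prime] (hA : ∀ x : A, x ^ p = 1) {f : MulAut A} (hf : f ^ (p - 1) = 1) :
    ∃ x ≠ 1, ∃ a : ℕ, f x = x ^ a := by
  have hiter (n : ℕ) (x : A) : f^[n] x = (f ^ n) x := by
    induction n with
    | zero => rfl
    | succ n ih => rw [Function.iterate_succ_apply', ih, pow_succ', MulAut.mul_apply]
  exact exists_ne_zero_map_eq_nsmul (V := Additive A) (f := f.toMonoidHom.toAdditive) hA
    fun x => (hiter (p - 1) x.toMul).trans (by rw [hf]; rfl)

theorem ker_conjNormal [N.Normal] :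
    (MulAut.conjNormal : G →* MulAut N).ker = Subgroup.centralizer N := by
  ext g
  simp [MulEquiv.ext_iff, Subtype.ext_iff, Subgroup.mem_centralizer_iff, mul_inv_eq_iff_eq_mul,
    eq_comm (a := g * _)]

/-- Schur's lemma for the `G`-group `N`. -/
theorem IsChiefFactor.eq_of_apply_eq {A : Type*} [Group A] (h : IsChiefFactor N ⊥) [N.Normal]
    {f₁ f₂ : N →* A}
    (hconj : ∀ g x, f₁ x = f₂ x → f₁ (MulAut.conjNormal g x) = f₂ (MulAut.conjNormal g x))
    {x : N} (hx : x ≠ 1) (hfx : f₁ x = f₂ x) : f₁ = f₂ := by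
  have hnormal : ((f₁.eqLocus f₂).map N.subtype).Normal := by
    refine ⟨?_⟩
    rintro _ ⟨y, hy, rfl⟩ g
    exact ⟨MulAut.conjNormal g y, hconj g y hy, MulAut.conjNormal_apply g y⟩
  have htop := h.eq_of_not_le hnormal bot_le (Subgroup.map_subtype_le _) fun hle =>
    hx (Subtype.ext (hle (Subgroup.mem_map_of_mem N.subtype hfx)))
  ext y
  obtain ⟨z, hz, hzy⟩ := htop.ge y.2
  rwa [← Subtype.ext hzy]

open scoped IsMulCommutative in
theorem IsChiefFactor.pow_eq_one [Finite G] (h : IsChiefFactor N ⊥) [IsMulCommutative N]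
    (hp : p.Prime) (hpN : p ∣ Nat.card N) (x : N) : x ^ p = 1 := by
  have := h.normal_left
  have : Fact p.Prime := ⟨hp⟩
  obtain ⟨y, hy⟩ := exists_prime_orderOf_dvd_card' p hpN
  have hy1 : y ≠ 1 := fun h1 => hp.ne_one (by rw [← hy, h1, orderOf_one])
  have hpow : powMonoidHom p = (1 : N →* N) :=
    h.eq_of_apply_eq (fun g z hz => by simp_all [← map_pow]) hy1 (hy ▸ pow_orderOf_eq_one y)
  exact DFunLike.congr_fun hpow x

open scoped IsMulCommutative commutatorElement in
theorem IsChiefFactor.exists_conjNormal_eq_pow [Finite G] (h : IsChiefFactor N ⊥) [N.Normal]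
    [IsMulCommutative N] (hp : p.Prime) (hpN : p ∣ Nat.card N)
    (hcomm : commutator G ≤ Subgroup.centralizer N)
    (hpow : ∀ g : G, g ^ (p - 1) ∈ Subgroup.centralizer (N : Set G)) (g : G) :
    ∃ a : ℕ, ∀ x : N, MulAut.conjNormal g x = x ^ a := by
  have : Fact p.Prime := ⟨hp⟩
  have : Nontrivial N := N.nontrivial_iff_ne_bot.2 h.lt.ne'
  have hconj_pow : (MulAut.conjNormal g : MulAut N) ^ (p - 1) = 1 := by
    rw [← map_pow, ← MonoidHom.mem_ker, ker_conjNormal]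
    exact hpow g
  have hconj_comm (g' : G) (y : N) : (MulAut.conjNormal g (MulAut.conjNormal g' y) : N) =
      MulAut.conjNormal g' (MulAut.conjNormal g y) := by
    have : ⁅g, g'⁆ ∈ (MulAut.conjNormal : G →* MulAut N).ker := by
      rw [ker_conjNormal]
      exact hcomm (Subgroup.commutator_mem_commutator (Subgroup.mem_top g) (Subgroup.mem_top g'))
    rw [MonoidHom.mem_ker, map_commutatorElement, commutatorElement_eq_one_iff_mul_comm] at this
    exact DFunLike.congr_fun this y
  obtain ⟨x, hx1, a, hxa⟩ := exists_ne_one_map_eq_pow (h.pow_eq_one hp hpN) hconj_pow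
  let f : N →* N := (MulAut.conjNormal g : MulAut N).toMonoidHom
  suffices f = powMonoidHom a from ⟨a, DFunLike.congr_fun this⟩
  refine h.eq_of_apply_eq (fun g' y hy => ?_) hx1 hxa
  calc MulAut.conjNormal g (MulAut.conjNormal g' y)
      = MulAut.conjNormal g' (MulAut.conjNormal g y) := hconj_comm g' y
    _ = MulAut.conjNormal g' (y ^ a) := congrArg _ hy
    _ = MulAut.conjNormal g' y ^ a := map_pow _ y a

theorem IsChiefFactor.card_eq_of_commutator_le_centralizer [Finite G] (h : IsChiefFactor N ⊥)
    [IsMulCommutative N] (hp : p.Prime) (hpN : p ∣ Nat.card N)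
    (hcomm : commutator G ≤ Subgroup.centralizer N)
    (hpow : ∀ g : G, g ^ (p - 1) ∈ Subgroup.centralizer (N : Set G)) : Nat.card N = p := by
  have := h.normal_left
  obtain ⟨x, hx, hx1⟩ := N.bot_or_exists_ne_one.resolve_left h.lt.ne'
  have hxN : Subgroup.zpowers x ≤ N := Subgroup.zpowers_le.2 hx
  have hnormal : (Subgroup.zpowers x).Normal := by
    refine ⟨fun y hy g => ?_⟩
    obtain ⟨a, ha⟩ := h.exists_conjNormal_eq_pow hp hpN hcomm hpow g
    have hconj := congrArg Subtype.val (ha ⟨y, hxN hy⟩)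
    rw [MulAut.conjNormal_apply] at hconj
    rw [hconj]
    exact pow_mem hy a
  have hzpowers := h.eq_of_not_le hnormal bot_le hxN
    fun hle => hx1 (hle (Subgroup.mem_zpowers x))
  have hxp := congrArg Subtype.val (h.pow_eq_one hp hpN ⟨x, hx⟩)
  have : Fact p.Prime := ⟨hp⟩
  rw [← hzpowers, Nat.card_zpowers]
  exact orderOf_eq_prime hxp hx1

end Eigenvalue

/-! ### Minimal normal subgroups inside the Frattini subgroup -/

section Frattini

variable {G : Type*} [Group G] {E H K L N P S T : Subgroup G} {p r : ℕ}

/-- The subgroup of all `g : G` that act trivially on every chief factor of `G` lying between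
`N` and `P`. -/
def chiefSeriesCentralizer (N P : Subgroup G) : Subgroup G :=
  ⨅ (H) (K) (h : IsChiefFactor H K) (_ : N ≤ K) (_ : H ≤ P),
    chiefCentralizer H K h.normal_left h.normal_right

theorem chiefSeriesCentralizer_le_chiefCentralizer (h : IsChiefFactor H K) (hNK : N ≤ K)
    (hHP : H ≤ P) :
    chiefSeriesCentralizer N P ≤ chiefCentralizer H K h.normal_left h.normal_right :=
  iInf₂_le_of_le H K <| iInf₂_le_of_le h hNK <| iInf_le _ hHP

theorem le_chiefSeriesCentralizer_iff :
    L ≤ chiefSeriesCentralizer N P ↔ ∀ ⦃H K : Subgroup G⦄ (h : IsChiefFactor H K), N ≤ K → H ≤ P →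
      L ≤ chiefCentralizer H K h.normal_left h.normal_right := by
  simp only [chiefSeriesCentralizer, le_iInf_iff]

theorem chiefSeriesCentralizer_normal : (chiefSeriesCentralizer N P).Normal := by
  refine Subgroup.normal_iInf_normal fun H => Subgroup.normal_iInf_normal fun K =>
    Subgroup.normal_iInf_normal fun h => Subgroup.normal_iInf_normal fun _ =>
      Subgroup.normal_iInf_normal fun _ => chiefCentralizer_normal h.normal_left h.normal_right

section PrimeFactors

variable (hp : p.Prime)
  (hindex : ∀ ⦃H K : Subgroup G⦄, IsChiefFactor H K → N ≤ K → H ≤ P → K.relIndex H = p)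
include hp hindex

theorem commutator_le_chiefSeriesCentralizer : commutator G ≤ chiefSeriesCentralizer N P :=
  le_chiefSeriesCentralizer_iff.2 fun _ _ h hNK hHP =>
    commutator_le_chiefCentralizer (hindex h hNK hHP ▸ hp) h.normal_left h.normal_right

theorem pow_mem_chiefSeriesCentralizer (g : G) : g ^ (p - 1) ∈ chiefSeriesCentralizer N P :=
  Subgroup.zpowers_le.1 <| le_chiefSeriesCentralizer_iff.2 fun _ _ h hNK hHP =>
    Subgroup.zpowers_le.2 <| hindex h hNK hHP ▸
      pow_mem_chiefCentralizer (hindex h hNK hHP ▸ hp) h.normal_left h.normal_right g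

theorem le_chiefSeriesCentralizer_of_isPGroup (hL : IsPGroup p L) :
    L ≤ chiefSeriesCentralizer N P :=
  le_chiefSeriesCentralizer_iff.2 fun _ _ h hNK hHP =>
    le_chiefCentralizer_of_isPGroup (hindex h hNK hHP ▸ hp) h.normal_left h.normal_right
      ((hindex h hNK hHP).symm ▸ hL)

end PrimeFactors

theorem le_sup_centralizer_of_le_chiefCentralizer [Fact r.Prime] (hS : IsPGroup r S)
    (hL : L.Normal) (hK : K.Normal) (hrK : ¬ r ∣ Nat.card K)
    (hSC : S ≤ chiefCentralizer L K hL hK) : L ≤ K ⊔ Subgroup.centralizer S := by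
  intro y hy
  have hconj (s : S) (z : {z : G // y⁻¹ * z ∈ K}) : y⁻¹ * (s * z * (s : G)⁻¹) ∈ K := by
    convert mul_mem (hK.conj_mem _ (hSC s.2 y hy) y⁻¹) (hK.conj_mem _ z.2 s) using 1
    group
  let : MulAction S {z : G // y⁻¹ * z ∈ K} :=
    { smul := fun s z => ⟨s * z * (s : G)⁻¹, hconj s z⟩
      one_smul := fun z => Subtype.ext (DFunLike.congr_fun (map_one MulAut.conj) (z : G))
      mul_smul := fun s t z => Subtype.ext <|
        DFunLike.congr_fun (map_mul MulAut.conj (s : G) t) (z : G) }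
  let coset : {z : G // y⁻¹ * z ∈ K} ≃ K := (Equiv.mulLeft y⁻¹).subtypeEquiv fun _ => Iff.rfl
  obtain ⟨z, hz⟩ := hS.nonempty_fixed_point_of_prime_not_dvd_card {z : G // y⁻¹ * z ∈ K}
    (by rwa [Nat.card_congr coset])
  have hzS : (z : G) ∈ Subgroup.centralizer (S : Set G) := Subgroup.mem_centralizer_iff.2
    fun s hs => mul_inv_eq_iff_eq_mul.1 (congrArg Subtype.val (hz ⟨s, hs⟩))
  have hy_eq : y = z * (y⁻¹ * z)⁻¹ := by group
  rw [hy_eq]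
  exact mul_mem (Subgroup.mem_sup_right hzS) (Subgroup.mem_sup_left (inv_mem z.2))

theorem le_sup_centralizer_of_le_chiefSeriesCentralizer [Finite G] [Fact r.Prime]
    (hS : IsPGroup r S) (hN : N.Normal) (hP : P.Normal) (hNP : N ≤ P) (hrP : ¬ r ∣ Nat.card P)
    (hSC : S ≤ chiefSeriesCentralizer N P) : P ≤ N ⊔ Subgroup.centralizer S := by
  obtain ⟨L, ⟨hL, hNL, hLP, hPL⟩, hLmin⟩ := (Set.toFinite {L : Subgroup G | L.Normal ∧ N ≤ L ∧
    L ≤ P ∧ P ≤ L ⊔ Subgroup.centralizer S}).exists_minimal ⟨P, hP, hNP, le_rfl, le_sup_left⟩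
  obtain rfl | hlt := hNL.eq_or_lt
  · exact hPL
  obtain ⟨K, hLK, hNK⟩ := exists_isChiefFactor_below hN hL hlt
  have hKP := hLK.lt.le.trans hLP
  have hLsup : L ≤ K ⊔ Subgroup.centralizer S :=
    le_sup_centralizer_of_le_chiefCentralizer hS hL hLK.normal_right
      (fun hr => hrP (hr.trans (Subgroup.card_dvd_of_le hKP)))
      (hSC.trans (chiefSeriesCentralizer_le_chiefCentralizer hLK hNK hLP))
  have hPK : P ≤ K ⊔ Subgroup.centralizer S := hPL.trans (sup_le hLsup le_sup_right)
  exact absurd (hLmin ⟨hLK.normal_right, hNK, hKP, hPK⟩ hLK.lt.le) hLK.lt.not_ge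

theorem eq_top_of_sup_eq_top_of_le_frattini [Finite G] (hN : N ≤ frattini G) (hT : T ⊔ N = ⊤) :
    T = ⊤ :=
  frattini_nongenerating (top_le_iff.1 (hT.ge.trans (sup_le_sup_left hN T)))

theorem IsChiefFactor.isPGroup_of_le_frattini [Finite G] [Fact p.Prime] (h : IsChiefFactor N ⊥)
    (hN : N ≤ frattini G) (hpN : p ∣ Nat.card N) : IsPGroup p N := by
  have := h.normal_left
  obtain ⟨P⟩ : Nonempty (Sylow p N) := inferInstance
  have hP : ((P : Subgroup N).map N.subtype).Normal := Subgroup.normalizer_eq_top_iff.1 <|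
    eq_top_of_sup_eq_top_of_le_frattini hN (Sylow.normalizer_sup_eq_top P)
  have hPN : (P : Subgroup N).map N.subtype = N := by
    refine h.eq_of_not_le hP bot_le (Subgroup.map_subtype_le _) fun hle => ?_
    rw [le_bot_iff, Subgroup.map_eq_bot_iff_of_injective _ N.subtype_injective] at hle
    exact P.ne_bot_of_dvd_card hpN hle
  rw [← hPN]
  exact P.isPGroup'.map _

theorem IsChiefFactor.le_centralizer_of_isPGroup [Finite G] [Fact p.Prime] (h : IsChiefFactor N ⊥)
    (hpN : p ∣ Nat.card N) (hP : P.Normal) (hPp : IsPGroup p P) :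
    P ≤ Subgroup.centralizer N := by
  have := h.normal_left
  let : MulAction P N := MulAction.compHom N ((MulAut.conjNormal (H := N)).comp P.subtype)
  obtain ⟨x, hx, hx1⟩ := hPp.exists_fixed_point_of_prime_dvd_card_of_fixed_point N hpN (a := 1)
    fun g => map_one (MulAut.conjNormal (g : G))
  have hxP : (x : G) ∈ Subgroup.centralizer (P : Set G) := by
    refine Subgroup.mem_centralizer_iff.2 fun g hg => ?_
    have hgx := congrArg Subtype.val (hx ⟨g, hg⟩)
    exact mul_inv_eq_iff_eq_mul.1 ((MulAut.conjNormal_apply g x).symm.trans hgx)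
  rw [Subgroup.le_centralizer_iff]
  refine h.le_of_inf_ne_bot inferInstance fun hbot => hx1 (Subtype.ext ?_)
  exact (Subgroup.mem_bot.1 (hbot ▸ ⟨x.2, hxP⟩)).symm

theorem sup_eq_of_relIndex_prime (hPE : P ≤ E) (hprime : (P.relIndex E).Prime) (hSE : S ≤ E)
    (hSP : ¬ S ≤ P) : P ⊔ S = E := by
  have hmul := Subgroup.relIndex_mul_relIndex P (P ⊔ S) E le_sup_left (sup_le hPE hSE)
  refine le_antisymm (sup_le hPE hSE) (Subgroup.relIndex_eq_one.1 ?_)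
  have hne : P.relIndex (P ⊔ S) ≠ 1 := fun h1 =>
    hSP (le_sup_right.trans (Subgroup.relIndex_eq_one.1 h1))
  rw [((Nat.dvd_prime hprime).1 (Dvd.intro _ hmul)).resolve_left hne] at hmul
  exact Nat.eq_of_mul_eq_mul_left hprime.pos (hmul.trans (mul_one _).symm)

/-- The Frattini argument gives `G = N_G(S) E = N_G(S) P S = N_G(S) N`, and `N ≤ Φ(G)`. -/
theorem map_subtype_sylow_normal_of_le_frattini [Finite G] [Fact r.Prime] (hN : N.Normal)
    (hNfr : N ≤ frattini G) (hNP : N ≤ P) (hEP : IsChiefFactor E P) (hr : P.relIndex E = r)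
    (hrP : ¬ r ∣ Nat.card P) (hEC : E ≤ chiefSeriesCentralizer N P) (S : Sylow r E) :
    ((S : Subgroup E).map E.subtype).Normal := by
  have := hEP.normal_left
  set S' : Subgroup G := (S : Subgroup E).map E.subtype
  have hS'E : S' ≤ E := Subgroup.map_subtype_le _
  have hS'P : ¬ S' ≤ P := by
    have hrS : r ∣ Nat.card S' := by
      rw [Subgroup.card_subtype]
      exact S.dvd_card_of_dvd_card (hr ▸ P.relIndex_dvd_card E)
    exact fun hle => hrP (hrS.trans (Subgroup.card_dvd_of_le hle))
  have hsup : P ⊔ S' = E := sup_eq_of_relIndex_prime hEP.lt.le (hr ▸ Fact.out) hS'E hS'P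
  have hP_le : P ≤ N ⊔ Subgroup.centralizer S' :=
    le_sup_centralizer_of_le_chiefSeriesCentralizer (S.isPGroup'.map _) hN hEP.normal_right hNP hrP
      (hS'E.trans hEC)
  have hE_le : E ≤ Subgroup.normalizer S' ⊔ N := by
    rw [← hsup, sup_comm _ N]
    exact sup_le (hP_le.trans (sup_le_sup_left (Subgroup.centralizer_le_normalizer _) N))
      (Subgroup.le_normalizer.trans le_sup_right)
  refine Subgroup.normalizer_eq_top_iff.1 (eq_top_of_sup_eq_top_of_le_frattini hNfr ?_)
  rw [eq_top_iff, ← Sylow.normalizer_sup_eq_top S]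
  exact sup_le le_sup_left hE_le

theorem isPGroup_of_relIndex_eq [Finite G] [Fact p.Prime] (hP : IsPGroup p P) (hPE : P ≤ E)
    (hindex : P.relIndex E = p) : IsPGroup p E := by
  obtain ⟨m, hm⟩ := IsPGroup.iff_card.1 hP
  have hcard := Subgroup.relIndex_mul_relIndex ⊥ P E bot_le hPE
  rw [Subgroup.relIndex_bot_left, Subgroup.relIndex_bot_left, hm, hindex, ← pow_succ] at hcard
  exact IsPGroup.of_card hcard.symm

theorem not_dvd_card_of_isPGroup [Finite G] [Fact p.Prime] (hr : r.Prime) (hrp : r ≠ p)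
    (hP : IsPGroup p P) : ¬ r ∣ Nat.card P := by
  obtain ⟨m, hm⟩ := IsPGroup.iff_card.1 hP
  rw [hm]
  exact fun hdvd => hrp ((Nat.prime_dvd_prime_iff_eq hr Fact.out).1 (hr.dvd_of_dvd_pow hdvd))

section UniqueMinimalNormal

variable [Finite G] (hN : IsChiefFactor N ⊥) (hNfr : N ≤ frattini G)
  (huniq : ∀ L : Subgroup G, L.Normal → L ≠ ⊥ → N ≤ L)
  (hprime : ∀ ⦃H K : Subgroup G⦄, IsChiefFactor H K → K ≠ ⊥ → (K.relIndex H).Prime)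
include hN hNfr huniq hprime

theorem chiefSeriesCentralizer_le_of_maximal [Fact p.Prime]
    (hP : Maximal (fun P : Subgroup G => P.Normal ∧ N ≤ P ∧ IsPGroup p P) P)
    (hPC : P ≤ chiefSeriesCentralizer N P) : chiefSeriesCentralizer N P ≤ P := by
  obtain ⟨⟨hPnormal, hNP, hPp⟩, hPmax⟩ := hP
  by_contra hle
  obtain ⟨E, hEP, hEC⟩ := exists_isChiefFactor_above hPnormal chiefSeriesCentralizer_normal
    (lt_of_le_not_ge hPC hle)
  obtain ⟨r, hr⟩ : ∃ r, P.relIndex E = r := ⟨_, rfl⟩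
  have : Fact r.Prime := ⟨hr ▸ hprime hEP (ne_bot_of_le_ne_bot hN.lt.ne' hNP)⟩
  have hrp : r ≠ p := by
    rintro rfl
    have hEr : IsPGroup r E := isPGroup_of_relIndex_eq hPp hEP.lt.le hr
    exact hEP.lt.not_ge (hPmax ⟨hEP.normal_left, hNP.trans hEP.lt.le, hEr⟩ hEP.lt.le)
  have hrP : ¬ r ∣ Nat.card P := not_dvd_card_of_isPGroup Fact.out hrp hPp
  obtain ⟨S⟩ : Nonempty (Sylow r E) := inferInstance
  have hS := map_subtype_sylow_normal_of_le_frattini hN.normal_left hNfr hNP hEP hr hrP hEC S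
  have hSbot : (S : Subgroup E).map E.subtype ≠ ⊥ := by
    rw [Ne, Subgroup.map_eq_bot_iff_of_injective _ E.subtype_injective]
    exact S.ne_bot_of_dvd_card (hr ▸ P.relIndex_dvd_card E)
  have hdisj := IsPGroup.disjoint_of_ne r p hrp _ _ (S.isPGroup'.map E.subtype) hPp
  exact hN.lt.ne' (le_bot_iff.1 (hdisj (huniq _ hS hSbot) hNP))

theorem card_prime_of_le_frattini_of_forall_le : (Nat.card N).Prime := by
  obtain ⟨p, hp, hpN⟩ := Nat.exists_prime_and_dvd fun h1 => hN.lt.ne' (Subgroup.card_eq_one.1 h1)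
  have : Fact p.Prime := ⟨hp⟩
  have hNp := hN.isPGroup_of_le_frattini hNfr hpN
  obtain ⟨P, hP⟩ := (Set.toFinite {P : Subgroup G | P.Normal ∧ N ≤ P ∧ IsPGroup p P}).exists_maximal
    ⟨N, hN.normal_left, le_rfl, hNp⟩
  have hPp : IsPGroup p P := hP.1.2.2
  have hindex ⦃H K : Subgroup G⦄ (h : IsChiefFactor H K) (hNK : N ≤ K) (hHP : H ≤ P) :
      K.relIndex H = p := by
    by_contra hne
    exact not_dvd_card_of_isPGroup (hprime h (ne_bot_of_le_ne_bot hN.lt.ne' hNK)) hne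
      (hPp.to_le hHP) (K.relIndex_dvd_card H)
  have hCN : chiefSeriesCentralizer N P ≤ Subgroup.centralizer N :=
    (chiefSeriesCentralizer_le_of_maximal hN hNfr huniq hprime hP
      (le_chiefSeriesCentralizer_of_isPGroup hp hindex hPp)).trans
        (hN.le_centralizer_of_isPGroup hpN hP.1.1 hPp)
  have : IsMulCommutative N := Subgroup.le_centralizer_iff_isMulCommutative.1
    (hN.le_centralizer_of_isPGroup hpN hN.normal_left hNp)
  rw [hN.card_eq_of_commutator_le_centralizer hp hpN
    ((commutator_le_chiefSeriesCentralizer hp hindex).trans hCN)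
    fun g => hCN (pow_mem_chiefSeriesCentralizer hp hindex g)]
  exact hp

end UniqueMinimalNormal

theorem IsChiefFactor.card_prime_of_le_frattini [Finite G] (hN : IsChiefFactor N ⊥)
    (hNfr : N ≤ frattini G)
    (hprime : ∀ ⦃H K : Subgroup G⦄, IsChiefFactor H K → K ≠ ⊥ → (K.relIndex H).Prime) :
    (Nat.card N).Prime := by
  by_cases hinf : ∃ L : Subgroup G, L.Normal ∧ L ≠ ⊥ ∧ N ⊓ L = ⊥
  · obtain ⟨L, hL, hLbot, hNL⟩ := hinf
    have := hprime (hN.sup_of_inf_eq_bot hL hNL) hLbot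
    rwa [Subgroup.relIndex_sup_right, ← Subgroup.inf_relIndex_right, inf_comm, hNL,
      Subgroup.relIndex_bot_left] at this
  · push Not at hinf
    exact card_prime_of_le_frattini_of_forall_le hN hNfr
      (fun L hL hLbot => hN.le_of_inf_ne_bot hL (hinf L hL hLbot)) hprime

end Frattini

/-! ### Huppert's theorem -/

section Huppert

variable {G : Type*} [Group G] {M N : Subgroup G} {p : ℕ}

/-- Every maximal subgroup of `G` has prime index, the hypothesis of Huppert's theorem. -/
def HasPrimeIndexCoatoms (G : Type*) [Group G] : Prop :=
  ∀ ⦃M : Subgroup G⦄, IsCoatom M → M.index.Prime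

theorem HasPrimeIndexCoatoms.quotient (hG : HasPrimeIndexCoatoms G) (N : Subgroup G) [N.Normal] :
    HasPrimeIndexCoatoms (G ⧸ N) := by
  intro M hM
  have hsurj := QuotientGroup.mk'_surjective N
  rw [← Subgroup.index_comap_of_surjective M hsurj]
  exact hG (Subgroup.isCoatom_comap_of_surjective hsurj hM)

theorem index_modEq_one_of_normalizer_le [Finite G] [Fact p.Prime] (P : Sylow p G)
    (hPM : Subgroup.normalizer (P : Set G) ≤ M) : M.index ≡ 1 [MOD p] := by
  have hP : (P : Subgroup G) ≤ M := Subgroup.le_normalizer.trans hPM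
  have hrel : (Subgroup.normalizer (P : Set G)).relIndex M ≡ 1 [MOD p] := by
    have hM := card_sylow_modEq_one p M
    rw [(P.subtype hP).card_eq_index_normalizer] at hM
    rwa [Subgroup.relIndex, ← Sylow.coe_coe, Subgroup.subgroupOf_normalizer_eq hP]
  have hG := card_sylow_modEq_one p G
  rw [P.card_eq_index_normalizer, ← Subgroup.relIndex_mul_index hPM] at hG
  simpa only [one_mul] using (hrel.symm.mul_right M.index).trans hG

theorem HasPrimeIndexCoatoms.sylow_normal [Finite G] (hG : HasPrimeIndexCoatoms G) [Fact p.Prime]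
    (hmax : ∀ q : ℕ, q.Prime → q ∣ Nat.card G → q ≤ p) (P : Sylow p G) :
    (P : Subgroup G).Normal := by
  refine Subgroup.normalizer_eq_top_iff.1 (by_contra fun htop => ?_)
  obtain ⟨M, hM, hPM⟩ := (eq_top_or_exists_le_coatom _).resolve_left htop
  have hprime := hG hM
  have hmod : M.index ≡ 1 [MOD p] := index_modEq_one_of_normalizer_le P hPM
  obtain hlt | heq := (hmax _ hprime M.index_dvd_card).lt_or_eq
  · exact hprime.ne_one (hmod.eq_of_lt_of_lt hlt (Fact.out : p.Prime).one_lt)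
  · rw [heq] at hmod
    exact (Fact.out : p.Prime).not_dvd_one ((hmod.dvd_iff dvd_rfl).1 dvd_rfl)

theorem card_quotient_lt_of_ne_bot [Finite G] (hN : N ≠ ⊥) : Nat.card (G ⧸ N) < Nat.card G :=
  (Subgroup.index_strictAnti (bot_lt_iff_ne_bot.2 hN)).trans_eq Subgroup.index_bot

theorem HasPrimeIndexCoatoms.isSolvable [Finite G] (hG : HasPrimeIndexCoatoms G) :
    Group.IsSolvable G := by
  induction hn : Nat.card G using Nat.strong_induction_on generalizing G with
  | _ n ih =>
  subst hn
  cases subsingleton_or_nontrivial G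
  · infer_instance
  have hcard : 1 < Nat.card G := Finite.one_lt_card
  obtain ⟨p, hp, hmax⟩ := (Nat.card G).primeFactors.exists_max_image id
    (Nat.nonempty_primeFactors.2 hcard)
  rw [Nat.mem_primeFactors] at hp
  have : Fact p.Prime := ⟨hp.1⟩
  obtain ⟨P⟩ : Nonempty (Sylow p G) := inferInstance
  have := hG.sylow_normal (p := p)
    (fun q hq hqG => hmax q (Nat.mem_primeFactors.2 ⟨hq, hqG, hp.2.2⟩)) P
  have hlt : Nat.card (G ⧸ (P : Subgroup G)) < Nat.card G :=
    card_quotient_lt_of_ne_bot (P.ne_bot_of_dvd_card hp.2.1)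
  have := P.isPGroup'.isNilpotent
  exact (Group.isSolvable_iff_subgroup_quotient (P : Subgroup G)).2
    ⟨inferInstance, ih _ hlt (hG.quotient _) rfl⟩

theorem IsChiefFactor.le_chiefCentralizer_of_isSolvable [Group.IsSolvable G]
    (h : IsChiefFactor N ⊥) : N ≤ chiefCentralizer N ⊥ h.normal_left h.normal_right := by
  have := h.normal_left
  have hlt : ⁅N, N⁆ < N := Group.IsSolvable.commutator_lt_of_ne_bot h.lt.ne'
  have hbot : ⁅N, N⁆ = ⊥ := (h.eq_or_eq inferInstance bot_le hlt.le).resolve_right hlt.ne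
  exact fun g hg x hx => hbot.le (Subgroup.commutator_mem_commutator hg hx)

theorem HasPrimeIndexCoatoms.card_prime [Finite G] (hG : HasPrimeIndexCoatoms G)
    (hN : IsChiefFactor N ⊥)
    (hprime : ∀ ⦃H K : Subgroup G⦄, IsChiefFactor H K → K ≠ ⊥ → (K.relIndex H).Prime) :
    (Nat.card N).Prime := by
  have := hG.isSolvable
  by_cases hfr : N ≤ frattini G
  · exact hN.card_prime_of_le_frattini hfr hprime
  obtain ⟨M, hM, hNM⟩ : ∃ M : Subgroup G, IsCoatom M ∧ ¬ N ≤ M := by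
    simpa only [frattini, Order.radical, Set.mem_ofPred_eq, le_iInf_iff, not_forall, exists_prop]
      using hfr
  have hsup : N ⊔ M = ⊤ := hM.2 _ (right_lt_sup.2 hNM)
  have hinf : N ⊓ M = ⊥ :=
    inf_eq_of_sup_eq_top hN hN.le_chiefCentralizer_of_isSolvable bot_le hM.1 hsup
  rw [← Subgroup.relIndex_bot_left, ← index_eq_relIndex_of_sup_eq_top hN.normal_left hsup hinf]
  exact hG hM

theorem HasPrimeIndexCoatoms.hasPrimeChiefFactors [Finite G] (hG : HasPrimeIndexCoatoms G) :
    HasPrimeChiefFactors G := by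
  induction hn : Nat.card G using Nat.strong_induction_on generalizing G with
  | _ n ih =>
  subst hn
  have hprime ⦃H K : Subgroup G⦄ (h : IsChiefFactor H K) (hK : K ≠ ⊥) : (K.relIndex H).Prime := by
    have := h.normal_right
    rw [← card_map_mk'_eq_relIndex, ← Subgroup.relIndex_bot_left]
    exact ih _ (card_quotient_lt_of_ne_bot hK) (hG.quotient K) rfl h.map_mk'
  intro H K h
  obtain rfl | hK := eq_or_ne K ⊥
  · rw [Subgroup.relIndex_bot_left]
    exact hG.card_prime h hprime
  · exact hprime h hK

end Huppert

/-! ### Submodularity of maximal subgroups -/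

section Submodular

variable {G : Type*} [Group G] {H K M N : Subgroup G} {k n : ℕ}

theorem map_topEquiv_normalCore_subgroupOf_top (M : Subgroup G) :
    (M.subgroupOf ⊤).normalCore.map (Subgroup.topEquiv (G := G)).toMonoidHom = M.normalCore := by
  ext x
  simp [Subgroup.mem_map, Subgroup.normalCore, Subgroup.mem_subgroupOf]

theorem modularlyEmbedded_top_iff :
    ModularlyEmbedded n M ⊤ ↔ M.Normal ∨ ∃ p q : ℕ, p.Prime ∧ q.Prime ∧
      ¬ Group.IsNilpotent (G ⧸ M.normalCore) ∧ M.normalCore.index = p * q ^ n ∧ M.index = p := by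
  let e : (⊤ : Subgroup G) ⧸ (M.subgroupOf ⊤).normalCore ≃* G ⧸ M.normalCore :=
    QuotientGroup.congr _ _ Subgroup.topEquiv (map_topEquiv_normalCore_subgroupOf_top M)
  have hnormal : (M.subgroupOf ⊤).Normal ↔ M.Normal := by
    rw [Subgroup.normal_subgroupOf_iff_le_normalizer le_top, top_le_iff,
      Subgroup.normalizer_eq_top_iff]
  have hcard : Nat.card ((⊤ : Subgroup G) ⧸ (M.subgroupOf ⊤).normalCore) = M.normalCore.index :=
    Nat.card_congr e.toEquiv
  have hindex : (M.subgroupOf ⊤).index = M.index := M.relIndex_top_right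
  rw [ModularlyEmbedded, hnormal, Group.isNilpotent_congr e, hcard, hindex]
  exact and_iff_right le_top

theorem kSubmodularIn_top_iff_of_isCoatom (hM : IsCoatom M) :
    KSubmodularIn k M ⊤ ↔ ∃ n, 0 < n ∧ n ≤ k ∧ ModularlyEmbedded n M ⊤ := by
  constructor
  · rintro ⟨m, c, h0, hm, hc⟩
    by_contra hnone
    have hconst (i : ℕ) (hi : i ≤ m) : c i = M := by
      induction i with
      | zero => exact h0
      | succ i ih =>
        obtain ⟨n, hn, hnk, hmod⟩ := hc i hi
        rw [ih (Nat.le_of_succ_le hi)] at hmod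
        refine (hM.le_iff.1 hmod.1).resolve_left fun htop => hnone ⟨n, hn, hnk, ?_⟩
        rwa [htop] at hmod
    exact hM.1 ((hconst m le_rfl).symm.trans hm)
  · rintro ⟨n, hn, hnk, hmod⟩
    refine ⟨1, fun i => if i = 0 then M else ⊤, rfl, rfl, fun i hi => ?_⟩
    obtain rfl := Nat.lt_one_iff.1 hi
    exact ⟨n, hn, hnk, hmod⟩

theorem index_prime_of_kSubmodularIn_top (hM : IsCoatom M) (h : KSubmodularIn k M ⊤) :
    M.index.Prime := by
  obtain ⟨n, -, -, hmod⟩ := (kSubmodularIn_top_iff_of_isCoatom hM).1 h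
  obtain hnormal | ⟨p, q, hp, -, -, -, hindex⟩ := modularlyEmbedded_top_iff.1 hmod
  · exact index_prime_of_isCoatom_of_normal hM
  · exact hindex ▸ hp

theorem normal_of_isCoatom_of_isNilpotent_quotient (hM : IsCoatom M) [N.Normal] (hNM : N ≤ M)
    (hnil : Group.IsNilpotent (G ⧸ N)) : M.Normal := by
  have hsurj := QuotientGroup.mk'_surjective N
  have hcomap : (M.map (QuotientGroup.mk' N)).comap (QuotientGroup.mk' N) = M := by
    rw [QuotientGroup.comap_map_mk', sup_eq_right.2 hNM]
  have hcoatom : IsCoatom (M.map (QuotientGroup.mk' N)) := by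
    refine ⟨fun htop => hM.1 (by rw [← hcomap, htop, Subgroup.comap_top]), fun L hL => ?_⟩
    have hL_comap : L.comap (QuotientGroup.mk' N) = ⊤ :=
      hM.2 _ (hcomap.symm.trans_lt ((Subgroup.comap_lt_comap_of_surjective hsurj).2 hL))
    rw [← Subgroup.map_comap_eq_self_of_surjective hsurj L, hL_comap,
      Subgroup.map_top_of_surjective _ hsurj]
  have hnormal := Subgroup.NormalizerCondition.normal_of_coatom _
    Group.normalizerCondition_of_isNilpotent hcoatom
  exact hcomap ▸ hnormal.comap (QuotientGroup.mk' N)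

theorem normal_iff_chiefCentralizer_eq_top (hH : H.Normal) (hK : K.Normal)
    (hHC : H ≤ chiefCentralizer H K hH hK) (hHM : H ⊔ M = ⊤) (hinf : H ⊓ M = K) :
    M.Normal ↔ chiefCentralizer H K hH hK = ⊤ := by
  have hcore := chiefCentralizer_inf_eq_normalCore hH hK hHM hinf
  constructor
  · intro hM
    rw [Subgroup.normalCore_eq_self, inf_eq_right] at hcore
    exact top_unique (hHM ▸ sup_le hHC hcore)
  · intro htop
    rw [htop, top_inf_eq] at hcore
    exact hcore ▸ M.normalCore_normal

theorem kSubmodularIn_top_iff_index_chiefCentralizer [Finite G] (hk : 0 < k)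
    (h : IsChiefFactor H K) (hp : (K.relIndex H).Prime) (hHM : H ⊔ M = ⊤) (hinf : H ⊓ M = K) :
    KSubmodularIn k M ⊤ ↔ chiefCentralizer H K h.1 h.2.1 = ⊤ ∨
      ∃ q n : ℕ, q.Prime ∧ 0 < n ∧ n ≤ k ∧ (chiefCentralizer H K h.1 h.2.1).index = q ^ n := by
  have hHC := le_chiefCentralizer_self hp h.1 h.2.1
  have hmul := index_chiefCentralizer_mul_index h.1 h.2.1 hHC hHM hinf
  have hMp : M.index.Prime := index_eq_relIndex_of_sup_eq_top h.1 hHM hinf ▸ hp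
  have hM := isCoatom_of_index_prime hMp
  rw [kSubmodularIn_top_iff_of_isCoatom hM,
    ← normal_iff_chiefCentralizer_eq_top h.1 h.2.1 hHC hHM hinf]
  simp only [modularlyEmbedded_top_iff]
  constructor
  · rintro ⟨n, hn, hnk, hnormal | ⟨p, q, hpp, hq, -, hcore, rfl⟩⟩
    · exact Or.inl hnormal
    · rw [hcore, mul_comm] at hmul
      exact Or.inr ⟨q, n, hq, hn, hnk, Nat.eq_of_mul_eq_mul_left hpp.pos hmul⟩
  · rintro (hnormal | ⟨q, n, hq, hn, hnk, hindex⟩)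
    · exact ⟨1, one_pos, hk, Or.inl hnormal⟩
    · refine ⟨n, hn, hnk, or_iff_not_imp_left.2 fun hnormal => ?_⟩
      have hnil : ¬ Group.IsNilpotent (G ⧸ M.normalCore) := fun hnil =>
        hnormal (normal_of_isCoatom_of_isNilpotent_quotient hM M.normalCore_le hnil)
      rw [hindex, mul_comm] at hmul
      exact ⟨M.index, q, hMp, hq, hnil, hmul.symm, rfl⟩

theorem HasPrimeChiefFactors.exists_isChiefFactor_normalCore [Finite G]
    (hG : HasPrimeChiefFactors G) (hM : IsCoatom M) :
    ∃ R, IsChiefFactor R M.normalCore ∧ R ⊔ M = ⊤ ∧ R ⊓ M = M.normalCore := by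
  obtain ⟨R, hR, -⟩ := exists_isChiefFactor_above M.normalCore_normal inferInstance
    (M.normalCore_le.trans_lt hM.lt_top)
  have := hR.normal_left
  have hRM : ¬ R ≤ M := fun hle => hR.lt.not_ge (Subgroup.normal_le_normalCore.2 hle)
  have hsup : R ⊔ M = ⊤ := hM.2 _ (right_lt_sup.2 hRM)
  exact ⟨R, hR, hsup, inf_eq_of_sup_eq_top hR (le_chiefCentralizer_self (hG hR) _ _)
    M.normalCore_le hM.1 hsup⟩

end Submodular

/-- Theorem 1: every maximal subgroup of `G` is `k`-submodular in `G` iff `G`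
is supersoluble and, for every complemented chief factor `H/K` of `G`,
`G/C_G(H/K)` is trivial or cyclic of order `q ^ n` for a prime `q` and a
natural number `n ≤ k`. -/
theorem maximal_kSubmodular_iff_supersolvable {G : Type*} [Group G] [Finite G]
    {k : ℕ} (hk : 0 < k) :
    (∀ M : Subgroup G, IsCoatom M → KSubmodularIn k M ⊤) ↔
      (IsSupersolvable G ∧
        ∀ H K : Subgroup G, ∀ hcf : IsChiefFactor H K,
          (∃ M : Subgroup G, H ⊔ M = ⊤ ∧ H ⊓ M = K) →
          (chiefCentralizer H K hcf.1 hcf.2.1 = ⊤ ∨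
            ∃ (q n : ℕ), q.Prime ∧ 0 < n ∧ n ≤ k ∧
              (chiefCentralizer H K hcf.1 hcf.2.1).index = q ^ n ∧
              ∃ g : G, chiefCentralizer H K hcf.1 hcf.2.1 ⊔
                Subgroup.zpowers g = ⊤)) := by
  constructor
  · intro hM
    have hprime : HasPrimeChiefFactors G := HasPrimeIndexCoatoms.hasPrimeChiefFactors
      fun M hcoatom => index_prime_of_kSubmodularIn_top hcoatom (hM M hcoatom)
    refine ⟨hprime.isSupersolvable, fun H K h ⟨M, hsup, hinf⟩ => ?_⟩
    have hcoatom : IsCoatom M :=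
      isCoatom_of_index_prime (index_eq_relIndex_of_sup_eq_top h.1 hsup hinf ▸ hprime h)
    refine ((kSubmodularIn_top_iff_index_chiefCentralizer hk h (hprime h) hsup hinf).1
      (hM M hcoatom)).imp_right fun ⟨q, n, hq, hn, hnk, hindex⟩ => ?_
    exact ⟨q, n, hq, hn, hnk, hindex,
      exists_chiefCentralizer_sup_zpowers_eq_top (hprime h) h.1 h.2.1⟩
  · rintro ⟨hG, hcent⟩ M hM
    have hprime := hG.hasPrimeChiefFactors
    obtain ⟨R, hR, hsup, hinf⟩ := hprime.exists_isChiefFactor_normalCore hM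
    refine (kSubmodularIn_top_iff_index_chiefCentralizer hk hR (hprime hR) hsup hinf).2 <|
      (hcent R M.normalCore hR ⟨M, hsup, hinf⟩).imp_right ?_
    exact fun ⟨q, n, hq, hn, hnk, hindex, _⟩ => ⟨q, n, hq, hn, hnk, hindex⟩
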